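/- arXiv:2110.06174 — 3 statements merged into one kernel-verified Lean document; each statement's English description precedes it below -/
import Mathlib

section
/- For any x = (Q₁,Q₂,Q₃,P₁,P₂,P₃) ∈ ℝ⁶ with Qᵢ = 0 for some i ∈ {1,2,3} and Q_j ≠ 0, Q_k ≠ 0 for the other two indices j, k, the partial derivative of Γ with respect to Pᵢ at x equals 2PᵢQ_j²Q_k²; consequently, if moreover Γ(x) = 0, then along any solution γ of the Hamiltonian system passing through x the derivative Qᵢ′ at that instant equals 2PᵢQ_j²Q_k² and is nonzero. -/
/-- The regularized Hamiltonian `Γ` of the eight-body cubic configuration, with fixed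
energy `E`, as a function of `x = (Q₁,Q₂,Q₃,P₁,P₂,P₃) ∈ ℝ⁶`. -/
noncomputable def cubicGamma (E : ℝ) (x : Fin 6 → ℝ) : ℝ :=
  (x 3) ^ 2 * (x 1) ^ 2 * (x 2) ^ 2 + (x 0) ^ 2 * (x 4) ^ 2 * (x 2) ^ 2 +
      (x 0) ^ 2 * (x 1) ^ 2 * (x 5) ^ 2
    - 2 * (x 0) ^ 2 * (x 1) ^ 2 * (x 2) ^ 2 / Real.sqrt ((x 0) ^ 4 + (x 1) ^ 4 + (x 2) ^ 4)
    - 2 * (x 0) ^ 2 * (x 1) ^ 2 * (x 2) ^ 2 / Real.sqrt ((x 0) ^ 4 + (x 1) ^ 4)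
    - 2 * (x 0) ^ 2 * (x 1) ^ 2 * (x 2) ^ 2 / Real.sqrt ((x 0) ^ 4 + (x 2) ^ 4)
    - 2 * (x 0) ^ 2 * (x 1) ^ 2 * (x 2) ^ 2 / Real.sqrt ((x 1) ^ 4 + (x 2) ^ 4)
    - 2 * (x 1) ^ 2 * (x 2) ^ 2 - 2 * (x 0) ^ 2 * (x 2) ^ 2 - 2 * (x 0) ^ 2 * (x 1) ^ 2
    - E * (x 0) ^ 2 * (x 1) ^ 2 * (x 2) ^ 2

/-- The index in `Fin 6` of the coordinate `Qᵢ`. -/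
def Qidx (i : Fin 3) : Fin 6 := ⟨i.val, by omega⟩

/-- The index in `Fin 6` of the coordinate `Pᵢ`. -/
def Pidx (i : Fin 3) : Fin 6 := ⟨i.val + 3, by omega⟩

/-- Partial derivative of `f : ℝ⁶ → ℝ` with respect to the `i`-th coordinate at `x`. -/
noncomputable def pderiv6 (f : (Fin 6 → ℝ) → ℝ) (i : Fin 6) (x : Fin 6 → ℝ) : ℝ :=
  deriv (fun t => f (Function.update x i t)) (x i)

/-- `γ : ℝ → ℝ⁶` is a solution of the Hamiltonian system associated to `Γ` (energy `E`):
`Qᵢ′(s) = ∂Γ/∂Pᵢ(γ(s))` and `Pᵢ′(s) = −∂Γ/∂Qᵢ(γ(s))` for `i = 1,2,3`. -/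
def IsCubicSol (E : ℝ) (γ : ℝ → Fin 6 → ℝ) : Prop :=
  ∀ s : ℝ, ∀ i : Fin 3,
    HasDerivAt (fun u => γ u (Qidx i)) (pderiv6 (cubicGamma E) (Pidx i) (γ s)) s ∧
    HasDerivAt (fun u => γ u (Pidx i)) (-pderiv6 (cubicGamma E) (Qidx i) (γ s)) s

/-!
Separating the terms of `Γ` divisible by `Qᵢ²` gives `Γ = (Pᵢ² - 2) Q_j² Q_k² + Qᵢ² R`, where `R`
does not involve `Pᵢ`. Hence `∂Γ/∂Pᵢ = 2 Pᵢ Q_j² Q_k²`, and on `Qᵢ = 0` the energy relation `Γ = 0`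
forces `Pᵢ² = 2` as soon as `Q_j` and `Q_k` do not vanish: the collision is crossed with nonzero
speed.
-/

/-- The cofactor `R` of `Qᵢ²` in `Γ = (Pᵢ² - 2) Q_j² Q_k² + Qᵢ² R`, where `i`, `j`, `k` are the
three indices in any order. -/
noncomputable def collisionCofactor (E : ℝ) (i j k : Fin 3) (x : Fin 6 → ℝ) : ℝ :=
  x (Pidx j) ^ 2 * x (Qidx k) ^ 2 + x (Qidx j) ^ 2 * x (Pidx k) ^ 2
    - 2 * x (Qidx j) ^ 2 * x (Qidx k) ^ 2 *
      (1 / √(x (Qidx i) ^ 4 + x (Qidx j) ^ 4 + x (Qidx k) ^ 4) +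
        1 / √(x (Qidx i) ^ 4 + x (Qidx j) ^ 4) + 1 / √(x (Qidx i) ^ 4 + x (Qidx k) ^ 4) +
        1 / √(x (Qidx j) ^ 4 + x (Qidx k) ^ 4))
    - 2 * x (Qidx k) ^ 2 - 2 * x (Qidx j) ^ 2 - E * x (Qidx j) ^ 2 * x (Qidx k) ^ 2

lemma Pidx_injective : Function.Injective Pidx := by
  decide

lemma Qidx_ne_Pidx (i j : Fin 3) : Qidx i ≠ Pidx j := by
  revert i j
  decide

section Distinct

variable {i j k : Fin 3}

lemma collisionCofactor_update_Pidx (hij : i ≠ j) (hik : i ≠ k) (E : ℝ) (x : Fin 6 → ℝ)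
    (t : ℝ) :
    collisionCofactor E i j k (Function.update x (Pidx i) t) = collisionCofactor E i j k x := by
  simp only [collisionCofactor, Function.update_of_ne (Qidx_ne_Pidx _ i),
    Function.update_of_ne (Pidx_injective.ne hij.symm),
    Function.update_of_ne (Pidx_injective.ne hik.symm)]

lemma cubicGamma_eq_add_collisionCofactor (hij : i ≠ j) (hik : i ≠ k) (hjk : j ≠ k)
    (E : ℝ) (x : Fin 6 → ℝ) :
    cubicGamma E x = (x (Pidx i) ^ 2 - 2) * (x (Qidx j) ^ 2 * x (Qidx k) ^ 2) +
      x (Qidx i) ^ 2 * collisionCofactor E i j k x := by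
  fin_cases i <;> fin_cases j <;> fin_cases k <;>
    first
    | contradiction
    | simp only [cubicGamma, collisionCofactor, Qidx, Pidx, Fin.mk_zero, Fin.mk_one,
        Fin.reduceFinMk, Fin.isValue, Nat.reduceAdd]
      ring_nf

lemma hasDerivAt_cubicGamma_update_Pidx (hij : i ≠ j) (hik : i ≠ k) (hjk : j ≠ k)
    (E : ℝ) (x : Fin 6 → ℝ) (t : ℝ) :
    HasDerivAt (fun u => cubicGamma E (Function.update x (Pidx i) u))
      (2 * t * x (Qidx j) ^ 2 * x (Qidx k) ^ 2) t := by
  simp only [cubicGamma_eq_add_collisionCofactor hij hik hjk, Function.update_self,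
    Function.update_of_ne (Qidx_ne_Pidx _ i), collisionCofactor_update_Pidx hij hik]
  refine ((((hasDerivAt_pow 2 t).sub_const 2).mul_const
    (x (Qidx j) ^ 2 * x (Qidx k) ^ 2)).add_const _).congr_deriv ?_
  ring

lemma pderiv6_cubicGamma_Pidx (hij : i ≠ j) (hik : i ≠ k) (hjk : j ≠ k)
    (E : ℝ) (x : Fin 6 → ℝ) :
    pderiv6 (cubicGamma E) (Pidx i) x = 2 * x (Pidx i) * x (Qidx j) ^ 2 * x (Qidx k) ^ 2 :=
  (hasDerivAt_cubicGamma_update_Pidx hij hik hjk E x (x (Pidx i))).deriv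

lemma IsCubicSol.hasDerivAt_Qidx {E : ℝ} {γ : ℝ → Fin 6 → ℝ} (hγ : IsCubicSol E γ)
    (hij : i ≠ j) (hik : i ≠ k) (hjk : j ≠ k) (s : ℝ) :
    HasDerivAt (fun u => γ u (Qidx i))
      (2 * γ s (Pidx i) * γ s (Qidx j) ^ 2 * γ s (Qidx k) ^ 2) s :=
  pderiv6_cubicGamma_Pidx hij hik hjk E (γ s) ▸ (hγ s i).1

lemma sq_Pidx_eq_two_of_Qidx_eq_zero (hij : i ≠ j) (hik : i ≠ k) (hjk : j ≠ k)
    {E : ℝ} {x : Fin 6 → ℝ} (hQi : x (Qidx i) = 0) (hQj : x (Qidx j) ≠ 0)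
    (hQk : x (Qidx k) ≠ 0) (hΓ : cubicGamma E x = 0) :
    x (Pidx i) ^ 2 = 2 := by
  have hprod : (x (Pidx i) ^ 2 - 2) * (x (Qidx j) ^ 2 * x (Qidx k) ^ 2) = 0 := by
    simpa [hQi, hΓ] using (cubicGamma_eq_add_collisionCofactor hij hik hjk E x).symm
  have hQ : x (Qidx j) ^ 2 * x (Qidx k) ^ 2 ≠ 0 := by positivity
  exact sub_eq_zero.mp ((mul_eq_zero_iff_right hQ).mp hprod)

end Distinct

/-- At a point `x` with `Qᵢ = 0`, `Q_j ≠ 0`, `Q_k ≠ 0` (`i, j, k` distinct), the partial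
derivative `∂Γ/∂Pᵢ(x)` equals `2PᵢQ_j²Q_k²`; consequently, if moreover `Γ(x) = 0`, then along
any solution `γ` of the Hamiltonian system passing through `x`, the derivative `Qᵢ′` at that
instant equals `2PᵢQ_j²Q_k²` and is nonzero. -/
theorem collision_regularized (E : ℝ) (x : Fin 6 → ℝ) (i j k : Fin 3)
    (hij : i ≠ j) (hik : i ≠ k) (hjk : j ≠ k)
    (hQi : x (Qidx i) = 0) (hQj : x (Qidx j) ≠ 0) (hQk : x (Qidx k) ≠ 0) :
    pderiv6 (cubicGamma E) (Pidx i) x =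
      2 * x (Pidx i) * (x (Qidx j)) ^ 2 * (x (Qidx k)) ^ 2 ∧
    (cubicGamma E x = 0 →
      ∀ (γ : ℝ → Fin 6 → ℝ) (s₀ : ℝ), IsCubicSol E γ → γ s₀ = x →
        HasDerivAt (fun u => γ u (Qidx i))
          (2 * x (Pidx i) * (x (Qidx j)) ^ 2 * (x (Qidx k)) ^ 2) s₀ ∧
        2 * x (Pidx i) * (x (Qidx j)) ^ 2 * (x (Qidx k)) ^ 2 ≠ 0) := by
  refine ⟨pderiv6_cubicGamma_Pidx hij hik hjk E x, ?_⟩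
  rintro hΓ γ s₀ hγ rfl
  have hPi : γ s₀ (Pidx i) ≠ 0 := by
    have hsq := sq_Pidx_eq_two_of_Qidx_eq_zero hij hik hjk hQi hQj hQk hΓ
    intro hzero
    norm_num [hzero] at hsq
  exact ⟨hγ.hasDerivAt_Qidx hij hik hjk s₀, by positivity⟩
end

section
/- If γ : ℝ → ℝ⁶ is a solution of the Hamiltonian system associated to the regularized Hamiltonian Γ, then the curve s ↦ S_f γ(s), whose components are (Q₃(s), −Q₁(s), Q₂(s), P₃(s), −P₁(s), P₂(s)), is also a solution of the same Hamiltonian system. -/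
/-- The time-preserving symmetry matrix `S_f = diag(R, R)`, `R = [[0,0,1],[−1,0,0],[0,1,0]]`. -/
def Sf : Matrix (Fin 6) (Fin 6) ℝ :=
  !![0, 0, 1, 0, 0, 0;
     -1, 0, 0, 0, 0, 0;
     0, 1, 0, 0, 0, 0;
     0, 0, 0, 0, 0, 1;
     0, 0, 0, -1, 0, 0;
     0, 0, 0, 0, 1, 0]

/-- The time-reversing symmetry matrix `S_r = diag(S, −S)`, `S = [[0,1,0],[1,0,0],[0,0,1]]`. -/
def Sr : Matrix (Fin 6) (Fin 6) ℝ :=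
  !![0, 1, 0, 0, 0, 0;
     1, 0, 0, 0, 0, 0;
     0, 0, 1, 0, 0, 0;
     0, 0, 0, 0, -1, 0;
     0, 0, 0, -1, 0, 0;
     0, 0, 0, 0, 0, -1]

section MonomialMap

variable {R ι ι' : Type*} [Mul R]

/-- The monomial map with coefficients `c` and index map `σ`: over a ring, the linear map whose
matrix has `c i` in column `σ i` of row `i` and zeros elsewhere. -/
def monomialMap (c : ι' → R) (σ : ι' → ι) (x : ι → R) : ι' → R :=
  fun i => c i * x (σ i)

theorem monomialMap_update [DecidableEq ι] [DecidableEq ι'] (c : ι' → R) {σ : ι' → ι}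
    (hσ : σ.Injective) (x : ι → R) (i : ι') (t : R) :
    monomialMap c σ (Function.update x (σ i) t) =
      Function.update (monomialMap c σ x) i (c i * t) := by
  refine Function.eq_update_iff.2 ⟨?_, fun j hj => ?_⟩
  · rw [monomialMap, Function.update_self]
  · rw [monomialMap, Function.update_of_ne (hσ.ne hj), monomialMap]

end MonomialMap

section HamiltonianSystem

variable {𝕜 : Type*} [NontriviallyNormedField 𝕜] {ι ι' κ : Type*} [DecidableEq ι]

/-- The partial derivative of `f` with respect to the `i`-th coordinate at `x`; it is `0` when
`f` is not differentiable at `x` along that coordinate, by the convention for `deriv`. -/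
noncomputable def partialDeriv (f : (ι → 𝕜) → 𝕜) (i : ι) (x : ι → 𝕜) : 𝕜 :=
  deriv (fun t => f (Function.update x i t)) (x i)

theorem partialDeriv_comp_monomialMap [DecidableEq ι'] (f : (ι' → 𝕜) → 𝕜) (c : ι' → 𝕜)
    {σ : ι' → ι} (hσ : σ.Injective) (i : ι') (x : ι → 𝕜) :
    partialDeriv (f ∘ monomialMap c σ) (σ i) x =
      c i * partialDeriv f i (monomialMap c σ x) := by
  simp only [partialDeriv, Function.comp_apply, monomialMap_update c hσ]
  exact deriv_comp_mul_left (c i) (fun t => f (Function.update (monomialMap c σ x) i t)) (x (σ i))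

/-- The curve `γ` solves Hamilton's equations for `H`. The conjugate pairs are indexed by `κ`; the
position and the momentum of the pair `k` are the coordinates `q k` and `p k` of the phase space
`ι → 𝕜`. -/
def IsHamiltonianSol (q p : κ → ι) (H : (ι → 𝕜) → 𝕜) (γ : 𝕜 → ι → 𝕜) : Prop :=
  ∀ s k, HasDerivAt (fun u => γ u (q k)) (partialDeriv H (p k) (γ s)) s ∧
    HasDerivAt (fun u => γ u (p k)) (-partialDeriv H (q k) (γ s)) s

theorem IsHamiltonianSol.monomialMap_of_comp {q p : κ → ι} {H : (ι → 𝕜) → 𝕜} {γ : 𝕜 → ι → 𝕜}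
    {c : ι → 𝕜} {σ : ι → ι} {τ : κ → κ} (hγ : IsHamiltonianSol q p (H ∘ monomialMap c σ) γ)
    (hσ : σ.Injective) (hq : ∀ k, σ (q k) = q (τ k)) (hp : ∀ k, σ (p k) = p (τ k))
    (hc : ∀ k, c (q k) * c (p k) = 1) :
    IsHamiltonianSol q p H (fun s => monomialMap c σ (γ s)) := by
  intro s k
  obtain ⟨hQ, hP⟩ := hγ s (τ k)
  rw [← hq, ← hp, partialDeriv_comp_monomialMap H c hσ] at hQ hP
  constructor
  · exact (hQ.const_mul (c (q k))).congr_deriv (by rw [← mul_assoc, hc, one_mul])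
  · exact (hP.const_mul (c (p k))).congr_deriv (by
      rw [mul_neg, ← mul_assoc, mul_comm (c (p k)), hc, one_mul])

end HamiltonianSystem

section CubicSymmetry

open Matrix

/-- The nonzero entries of `S_f`, row by row. -/
def SfCoeff : Fin 6 → ℝ := ![1, -1, 1, 1, -1, 1]

/-- The columns in which the nonzero entries of `S_f` stand, row by row. -/
def SfIndex : Fin 6 → Fin 6 := ![2, 0, 1, 5, 3, 4]

theorem Sf_mulVec (x : Fin 6 → ℝ) : Sf *ᵥ x = monomialMap SfCoeff SfIndex x := by
  funext i
  fin_cases i <;>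
    simp [Sf, mulVec, dotProduct, Fin.sum_univ_six, monomialMap, SfCoeff, SfIndex]

theorem SfIndex_injective : SfIndex.Injective := by decide

theorem SfIndex_Qidx (i : Fin 3) : SfIndex (Qidx i) = Qidx (![2, 0, 1] i) := by
  decide +revert

theorem SfIndex_Pidx (i : Fin 3) : SfIndex (Pidx i) = Pidx (![2, 0, 1] i) := by
  decide +revert

theorem SfCoeff_Qidx_mul_SfCoeff_Pidx (i : Fin 3) : SfCoeff (Qidx i) * SfCoeff (Pidx i) = 1 := by
  fin_cases i <;> simp [SfCoeff, Qidx, Pidx]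

theorem cubicGamma_comp_monomialMap_Sf (E : ℝ) :
    cubicGamma E ∘ monomialMap SfCoeff SfIndex = cubicGamma E := by
  funext x
  have hx : monomialMap SfCoeff SfIndex x = ![x 2, -x 0, x 1, x 5, -x 3, x 4] := by
    funext i
    fin_cases i <;> simp [monomialMap, SfCoeff, SfIndex]
  have h_even : (-x 0) ^ 4 = x 0 ^ 4 := Even.neg_pow (by decide) _
  have h_sum : x 2 ^ 4 + x 0 ^ 4 + x 1 ^ 4 = x 0 ^ 4 + x 1 ^ 4 + x 2 ^ 4 := by ring
  simp only [Function.comp_apply, hx, cubicGamma, cons_val, h_even, neg_sq]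
  rw [h_sum, add_comm (x 2 ^ 4) (x 0 ^ 4), add_comm (x 2 ^ 4) (x 1 ^ 4)]
  ring

theorem isCubicSol_iff_isHamiltonianSol {E : ℝ} {γ : ℝ → Fin 6 → ℝ} :
    IsCubicSol E γ ↔ IsHamiltonianSol Qidx Pidx (cubicGamma E) γ :=
  Iff.rfl

end CubicSymmetry

/-- If `γ` is a solution of the Hamiltonian system associated to the regularized
Hamiltonian `Γ`, then `s ↦ S_f γ(s)`, with components
`(Q₃(s), −Q₁(s), Q₂(s), P₃(s), −P₁(s), P₂(s))`, is also a solution. -/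
theorem Sf_symmetry (E : ℝ) (γ : ℝ → Fin 6 → ℝ) (hγ : IsCubicSol E γ) :
    IsCubicSol E (fun s => Sf.mulVec (γ s)) := by
  simp only [isCubicSol_iff_isHamiltonianSol, Sf_mulVec] at hγ ⊢
  rw [← cubicGamma_comp_monomialMap_Sf E] at hγ
  exact hγ.monomialMap_of_comp SfIndex_injective SfIndex_Qidx SfIndex_Pidx
    SfCoeff_Qidx_mul_SfCoeff_Pidx
end

section
/- Let γ be a T-periodic solution of the Hamiltonian system ẋ = J∇Γ(x) and let S be a 2n×2n real matrix such that: (1) there exists N ∈ ℕ, N ≥ 1, with γ(s + T/N) = S γ(s) for all s; (2) Γ(Sx) = Γ(x) for all x; (3) SJ = JS; (4) S is orthogonal. Then the fundamental matrix solution X of the linearization along γ satisfies X(s + T/N) = S X(s) Sᵀ X(T/N) for all s ∈ ℝ. -/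
open Matrix

/-- The standard `2n × 2n` symplectic matrix `J = [[0, I],[−I, 0]]`, with the index set
`Fin n ⊕ Fin n` (first summand: configuration coordinates, second: momenta). -/
def stdJ (n : ℕ) : Matrix (Fin n ⊕ Fin n) (Fin n ⊕ Fin n) ℝ :=
  Matrix.fromBlocks 0 1 (-1) 0

/-- The gradient of `f : ℝ^ι → ℝ` at `x`, componentwise via the Fréchet derivative. -/
noncomputable def gradV {ι : Type} [Fintype ι] [DecidableEq ι]
    (f : (ι → ℝ) → ℝ) (x : ι → ℝ) : ι → ℝ :=
  fun i => fderiv ℝ f x (Pi.single i 1)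

/-- The Hessian matrix `D²f(x)` of `f : ℝ^ι → ℝ` at `x`. -/
noncomputable def hessM {ι : Type} [Fintype ι] [DecidableEq ι]
    (f : (ι → ℝ) → ℝ) (x : ι → ℝ) : Matrix ι ι ℝ :=
  Matrix.of fun i j => fderiv ℝ (fun y => fderiv ℝ f y (Pi.single j 1)) x (Pi.single i 1)

/-! Two solutions `Y`, `Z` of a linear Hamiltonian system `W' = K H W`, with `K` skew-symmetric and
`H` symmetric, have constant pairing `Yᵀ K⁻¹ Z`. Pairing the fundamental solution `X` with itself
shows that `X s` is invertible, and pairing it with `Z` then gives `Z s = X s * Z 0`, without a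
Gronwall estimate. Differentiating `Γ (S x) = Γ x` twice shows that `S⁻¹ * X (s + τ)` solves the
same linearized system as `X`, so it equals `X s * S⁻¹ * X τ`. -/

section MatrixDerivatives

variable {𝕜 l m p R : Type*} [NontriviallyNormedField 𝕜]

lemma hasDerivAt_matrix_iff [Finite l] [Finite m] [NormedAddCommGroup R] [NormedSpace 𝕜 R]
    {A : 𝕜 → Matrix l m R} {A' : Matrix l m R} {s : 𝕜} :
    HasDerivAt A A' s ↔ ∀ i j, HasDerivAt (fun u => A u i j) (A' i j) s := by
  have := Fintype.ofFinite l
  have := Fintype.ofFinite m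
  exact hasDerivAt_pi.trans (forall_congr' fun _ => hasDerivAt_pi)

lemma hasDerivAt_matrix_transpose [Finite l] [Finite m] [NormedAddCommGroup R] [NormedSpace 𝕜 R]
    {A : 𝕜 → Matrix l m R} {A' : Matrix l m R} {s : 𝕜} (hA : HasDerivAt A A' s) :
    HasDerivAt (fun u => (A u)ᵀ) A'ᵀ s :=
  hasDerivAt_matrix_iff.2 fun i j => hasDerivAt_matrix_iff.1 hA j i

variable [Finite l] [Fintype m] [Finite p] [NormedRing R] [NormedAlgebra 𝕜 R]

lemma hasDerivAt_matrix_mul {A : 𝕜 → Matrix l m R} {A' : Matrix l m R} {B : 𝕜 → Matrix m p R}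
    {B' : Matrix m p R} {s : 𝕜}
    (hA : HasDerivAt A A' s) (hB : HasDerivAt B B' s) :
    HasDerivAt (fun u => A u * B u) (A' * B s + A s * B') s := by
  refine hasDerivAt_matrix_iff.2 fun i j => ?_
  simp only [Matrix.mul_apply, Matrix.add_apply, ← Finset.sum_add_distrib]
  exact HasDerivAt.fun_sum fun k _ =>
    (hasDerivAt_matrix_iff.1 hA i k).fun_mul (hasDerivAt_matrix_iff.1 hB k j)

lemma hasDerivAt_matrix_const_mul (C : Matrix l m R) {B : 𝕜 → Matrix m p R}
    {B' : Matrix m p R} {s : 𝕜} (hB : HasDerivAt B B' s) :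
    HasDerivAt (fun u => C * B u) (C * B') s := by
  have hC : HasDerivAt (fun _ => C) 0 s :=
    hasDerivAt_matrix_iff.2 fun i j => hasDerivAt_const s (C i j)
  simpa using hasDerivAt_matrix_mul hC hB

end MatrixDerivatives

section LinearHamiltonianSystems

open scoped Matrix.Norms.Elementwise

variable {ι m p : Type*} [Fintype ι] [DecidableEq ι] [Finite m] [Finite p]
  {K : Matrix ι ι ℝ} {H : ℝ → Matrix ι ι ℝ}

lemma hamiltonian_transpose_mul_inv_mul_eq (hK : Kᵀ = -K) (hKdet : IsUnit K.det)
    (hH : ∀ s, (H s).IsSymm) {Y : ℝ → Matrix ι m ℝ} {Z : ℝ → Matrix ι p ℝ}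
    (hY : ∀ s, HasDerivAt Y (K * H s * Y s) s) (hZ : ∀ s, HasDerivAt Z (K * H s * Z s) s)
    (s t : ℝ) : (Y s)ᵀ * K⁻¹ * Z s = (Y t)ᵀ * K⁻¹ * Z t := by
  have hderiv (s : ℝ) : HasDerivAt (fun u => (Y u)ᵀ * (K⁻¹ * Z u)) 0 s := by
    have hYt := hasDerivAt_matrix_transpose (hY s)
    have hKZ := hasDerivAt_matrix_const_mul K⁻¹ (hZ s)
    convert hasDerivAt_matrix_mul hYt hKZ using 1
    simp [Matrix.transpose_mul, hK, (hH s).eq, Matrix.mul_assoc,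
      Matrix.mul_nonsing_inv_cancel_left K _ hKdet, Matrix.nonsing_inv_mul_cancel_left K _ hKdet]
  have := Fintype.ofFinite m
  have := Fintype.ofFinite p
  rw [Matrix.mul_assoc, Matrix.mul_assoc]
  exact is_const_of_deriv_eq_zero (f := fun u => (Y u)ᵀ * (K⁻¹ * Z u))
    (fun s => (hderiv s).differentiableAt) (fun s => (hderiv s).deriv) s t

lemma hamiltonian_eq_fundamental_mul (hK : Kᵀ = -K) (hKdet : IsUnit K.det) (hH : ∀ s, (H s).IsSymm)
    {X : ℝ → Matrix ι ι ℝ} {Z : ℝ → Matrix ι m ℝ} (hX0 : X 0 = 1)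
    (hX : ∀ s, HasDerivAt X (K * H s * X s) s) (hZ : ∀ s, HasDerivAt Z (K * H s * Z s) s)
    (s : ℝ) : Z s = X s * Z 0 := by
  have hXX : (X s)ᵀ * K⁻¹ * X s = K⁻¹ := by
    simpa [hX0] using hamiltonian_transpose_mul_inv_mul_eq hK hKdet hH hX hX s 0
  have hXZ : (X s)ᵀ * K⁻¹ * Z s = K⁻¹ * Z 0 := by
    simpa [hX0] using hamiltonian_transpose_mul_inv_mul_eq hK hKdet hH hX hZ s 0
  have hinv : X s * (K * ((X s)ᵀ * K⁻¹)) = 1 := by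
    rw [mul_eq_one_comm, Matrix.mul_assoc, hXX, Matrix.mul_nonsing_inv K hKdet]
  calc Z s
    _ = X s * (K * ((X s)ᵀ * K⁻¹)) * Z s := by rw [hinv, Matrix.one_mul]
    _ = X s * (K * ((X s)ᵀ * K⁻¹ * Z s)) := by simp only [Matrix.mul_assoc]
    _ = X s * Z 0 := by rw [hXZ, Matrix.mul_nonsing_inv_cancel_left K _ hKdet]

lemma hamiltonian_fundamental_add (hK : Kᵀ = -K) (hKdet : IsUnit K.det) (hH : ∀ s, (H s).IsSymm)
    {S : Matrix ι ι ℝ} (hS : S * K * Sᵀ = K) {τ : ℝ} (hHS : ∀ s, H s = Sᵀ * H (s + τ) * S)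
    {X : ℝ → Matrix ι ι ℝ} (hX0 : X 0 = 1) (hX : ∀ s, HasDerivAt X (K * H s * X s) s) (s : ℝ) :
    X (s + τ) = S * X s * S⁻¹ * X τ := by
  have hSdet : IsUnit S.det := by
    refine S.isUnit_iff_isUnit_det.1 (IsUnit.of_mul_eq_one (K * Sᵀ * K⁻¹) ?_)
    rw [← Matrix.mul_assoc, ← Matrix.mul_assoc, hS, Matrix.mul_nonsing_inv K hKdet]
  have hcoeff (s : ℝ) : S⁻¹ * (K * H (s + τ)) = K * H s * S⁻¹ :=
    calc S⁻¹ * (K * H (s + τ))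
      _ = S⁻¹ * (S * (K * Sᵀ * H (s + τ))) := by
          rw [← Matrix.mul_assoc S, ← Matrix.mul_assoc S, hS]
      _ = K * (Sᵀ * H (s + τ)) := by
          rw [Matrix.nonsing_inv_mul_cancel_left S _ hSdet, Matrix.mul_assoc]
      _ = K * (Sᵀ * H (s + τ) * S) * S⁻¹ := by
          rw [Matrix.mul_assoc K, Matrix.mul_nonsing_inv_cancel_right S _ hSdet]
      _ = K * H s * S⁻¹ := by rw [← hHS]
  have hshift (s : ℝ) :
      HasDerivAt (fun u => S⁻¹ * X (u + τ)) (K * H s * (S⁻¹ * X (s + τ))) s := by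
    rw [← Matrix.mul_assoc (K * H s), ← hcoeff, Matrix.mul_assoc S⁻¹]
    exact hasDerivAt_matrix_const_mul S⁻¹ ((hX (s + τ)).comp_add_const s τ)
  have hflow : S⁻¹ * X (s + τ) = X s * (S⁻¹ * X τ) := by
    simpa using hamiltonian_eq_fundamental_mul hK hKdet hH hX0 hX hshift s
  rw [← Matrix.mul_nonsing_inv_cancel_left S (X (s + τ)) hSdet, hflow]
  simp only [Matrix.mul_assoc]

end LinearHamiltonianSystems

section Hessian

lemma hasFDerivAt_fderiv_comp_clm {𝕜 E F G : Type*} [NontriviallyNormedField 𝕜]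
    [NormedAddCommGroup E] [NormedSpace 𝕜 E] [NormedAddCommGroup F] [NormedSpace 𝕜 F]
    [NormedAddCommGroup G] [NormedSpace 𝕜 G] {f : F → G} (hf : Differentiable 𝕜 f)
    (L : E →L[𝕜] F) {x : E} {B : F →L[𝕜] F →L[𝕜] G} (hB : HasFDerivAt (fderiv 𝕜 f) B (L x)) :
    HasFDerivAt (fderiv 𝕜 (f ∘ L)) (B.bilinearComp L L) x := by
  have hfst : fderiv 𝕜 (f ∘ L) = fun y => (fderiv 𝕜 f (L y)).comp L :=
    funext fun y => ((hf (L y)).hasFDerivAt.comp y L.hasFDerivAt).fderiv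
  rw [hfst]
  refine ((hB.comp x L.hasFDerivAt).clm_comp (hasFDerivAt_const L x)).congr_fderiv ?_
  ext u v
  simp

variable {ι κ : Type} [Fintype ι] [DecidableEq ι] [Fintype κ] [DecidableEq κ]
  {f : (ι → ℝ) → ℝ} {B : (ι → ℝ) →L[ℝ] (ι → ℝ) →L[ℝ] ℝ}

lemma hessM_eq_toMatrix₂' {x : ι → ℝ} (hB : HasFDerivAt (fderiv ℝ f) B x) :
    hessM f x = LinearMap.toMatrix₂' ℝ B.toLinearMap₁₂ := by
  ext i j
  simp [hessM, fderiv_clm_apply hB.differentiableAt (differentiableAt_const _), hB.fderiv,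
    LinearMap.toMatrix₂'_apply]

lemma isSymm_hessM (hf : Differentiable ℝ f) {x : ι → ℝ}
    (hf' : DifferentiableAt ℝ (fderiv ℝ f) x) : (hessM f x).IsSymm := by
  ext i j
  simp only [hessM_eq_toMatrix₂' hf'.hasFDerivAt, Matrix.transpose_apply,
    LinearMap.toMatrix₂'_apply]
  exact second_derivative_symmetric (fun y => (hf y).hasFDerivAt) hf'.hasFDerivAt _ _

lemma hessM_comp_mulVec (hf : Differentiable ℝ f) (S : Matrix ι κ ℝ) {x : κ → ℝ}
    (hf' : DifferentiableAt ℝ (fderiv ℝ f) (S *ᵥ x)) :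
    hessM (fun y => f (S *ᵥ y)) x = Sᵀ * hessM f (S *ᵥ x) * S := by
  have hcomp := hasFDerivAt_fderiv_comp_clm hf S.toLin'.toContinuousLinearMap hf'.hasFDerivAt
  rw [hessM_eq_toMatrix₂' hf'.hasFDerivAt, LinearMap.mul_toMatrix₂'_mul, Matrix.transpose_transpose]
  exact hessM_eq_toMatrix₂' hcomp

end Hessian

lemma stdJ_eq_J_transpose (n : ℕ) : stdJ n = (Matrix.J (Fin n) ℝ)ᵀ := by
  simp [stdJ, Matrix.J, Matrix.fromBlocks_transpose]

lemma stdJ_transpose (n : ℕ) : (stdJ n)ᵀ = -stdJ n := by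
  simp [stdJ_eq_J_transpose, Matrix.J_transpose]

lemma isUnit_det_stdJ (n : ℕ) : IsUnit (stdJ n).det := by
  rw [stdJ_eq_J_transpose, Matrix.det_transpose]
  exact Matrix.isUnit_det_J (Fin n) ℝ

theorem roberts_time_preserving_general {ι : Type} [Fintype ι] [DecidableEq ι]
    {K : Matrix ι ι ℝ} (hK : Kᵀ = -K) (hKdet : IsUnit K.det)
    {Γ : (ι → ℝ) → ℝ} (hΓ : Differentiable ℝ Γ) (hΓ' : Differentiable ℝ (fderiv ℝ Γ))
    {γ : ℝ → ι → ℝ} {S : Matrix ι ι ℝ} {τ : ℝ} (hsym : ∀ s, γ (s + τ) = S *ᵥ γ s)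
    (hSinv : ∀ x, Γ (S *ᵥ x) = Γ x) (hSK : S * K * Sᵀ = K)
    {X : ℝ → Matrix ι ι ℝ} (hX0 : X 0 = 1)
    (hX : ∀ s i j, HasDerivAt (fun u => X u i j) ((K * hessM Γ (γ s) * X s) i j) s) (s : ℝ) :
    X (s + τ) = S * X s * S⁻¹ * X τ := by
  refine hamiltonian_fundamental_add hK hKdet (fun s => isSymm_hessM hΓ (hΓ' (γ s))) hSK
    (fun s => ?_) hX0 (fun s => hasDerivAt_matrix_iff.2 (hX s)) s
  rw [hsym, ← hessM_comp_mulVec hΓ S (hΓ' _), funext hSinv]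

/-- Roberts' Lemma 2.1: if `γ` is a `T`-periodic solution of `ẋ = J∇Γ(x)` and `S` is an
orthogonal matrix with `γ(s + T/N) = Sγ(s)`, `Γ(Sx) = Γ(x)`, and `SJ = JS`, then the
fundamental matrix solution `X` of the linearization along `γ` satisfies
`X(s + T/N) = S X(s) Sᵀ X(T/N)` for all `s`. -/
theorem roberts_time_preserving (n N : ℕ) (hn : 1 ≤ n) (hN : 1 ≤ N) (T : ℝ) (hT : 0 < T)
    (Γ : ((Fin n ⊕ Fin n) → ℝ) → ℝ) (hΓ : ContDiff ℝ 2 Γ)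
    (γ : ℝ → (Fin n ⊕ Fin n) → ℝ)
    (hsol : ∀ s : ℝ, HasDerivAt γ ((stdJ n).mulVec (gradV Γ (γ s))) s)
    (hper : ∀ s : ℝ, γ (s + T) = γ s)
    (S : Matrix (Fin n ⊕ Fin n) (Fin n ⊕ Fin n) ℝ)
    (hsym : ∀ s : ℝ, γ (s + T / N) = S.mulVec (γ s))
    (hSinv : ∀ x, Γ (S.mulVec x) = Γ x)
    (hSJ : S * stdJ n = stdJ n * S)
    (horth : Sᵀ * S = 1)
    (X : ℝ → Matrix (Fin n ⊕ Fin n) (Fin n ⊕ Fin n) ℝ)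
    (hX0 : X 0 = 1)
    (hX : ∀ (s : ℝ) (i j : Fin n ⊕ Fin n),
      HasDerivAt (fun u => X u i j) ((stdJ n * hessM Γ (γ s) * X s) i j) s) :
    ∀ s : ℝ, X (s + T / N) = S * X s * Sᵀ * X (T / N) := by
  rw [← Matrix.inv_eq_left_inv horth]
  exact roberts_time_preserving_general (stdJ_transpose n) (isUnit_det_stdJ n)
    (hΓ.differentiable two_ne_zero)
    ((hΓ.fderiv_right one_add_one_eq_two.le).differentiable one_ne_zero) hsym hSinv
    (by rw [hSJ, Matrix.mul_assoc, mul_eq_one_comm.1 horth, Matrix.mul_one]) hX0 hX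
end
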